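/- In the autonomous case (b(t) ≡ b > 0, ω(t) ≡ ω ≥ 0) with ω < π², the global attractor 𝒜 of the multivalued semiflow G generated by problem (InclAut) is compact in V^{2r} for every 0 ≤ r < 1. -/

import Mathlib

open MeasureTheory Set

noncomputable section

/-- Lebesgue measure restricted to the spatial interval `(0,1)`. -/
def μ01 : Measure ℝ := volume.restrict (Ioo (0:ℝ) 1)

/-- `H = L²(0,1)`. -/
abbrev Hsp : Type := Lp ℝ 2 μ01

/-- The Heaviside multifunction. -/
def heaviside (s : ℝ) : Set ℝ :=
  if s < 0 then {-1} else if s = 0 then Icc (-1) 1 else {1}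

/-- Condition (Cond1). -/
structure Cond1 (b ω : ℝ → ℝ) (b0 b1 ω0 ω1 : ℝ) : Prop where
  contb : Continuous b
  contω : Continuous ω
  b0pos : 0 < b0
  blb : ∀ t, b0 ≤ b t
  bub : ∀ t, b t ≤ b1
  ω0nonneg : 0 ≤ ω0
  ωlb : ∀ t, ω0 ≤ ω t
  ωub : ∀ t, ω t ≤ ω1

/-- `v ∈ H²(0,1) ∩ H¹₀(0,1)` with (weak) second derivative `w ∈ L²(0,1)`:
`v` has a representative that is continuous on `[0,1]`, vanishes at the boundary,
is differentiable on `(0,1)` and whose derivative is an antiderivative of `w`. -/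
def InDomainA (v w : Hsp) : Prop :=
  ∃ vt : ℝ → ℝ, ContinuousOn vt (Icc 0 1) ∧ vt 0 = 0 ∧ vt 1 = 0 ∧
    (∀ᵐ x ∂μ01, vt x = v x) ∧
    ∃ g : ℝ → ℝ,
      (∀ x ∈ Ioo (0:ℝ) 1, HasDerivAt vt (g x) x) ∧
      ∀ x ∈ Ioo (0:ℝ) 1, ∀ y ∈ Ioo (0:ℝ) 1, g x - g y = ∫ z in y..x, w z

/-- A strong solution of the inclusion on `[τ,∞)`, with explicit data:
`r` is the `L²`-selection, `u'` the time derivative, `uxx` the second spatial derivative. -/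
structure IsStrongSolutionWith (b ω : ℝ → ℝ) (τ : ℝ) (u r u' uxx : ℝ → Hsp) : Prop where
  cont : ContinuousOn u (Ici τ)
  rmem : ∀ T, τ < T → MemLp r 2 (volume.restrict (Ioo τ T))
  sel : ∀ᵐ t ∂(volume.restrict (Ioi τ)), ∀ᵐ x ∂μ01,
      ∃ h ∈ heaviside (u t x), r t x = b t * h + ω t * u t x
  dom : ∀ᵐ t ∂(volume.restrict (Ioi τ)), InDomainA (u t) (uxx t)
  eq : ∀ᵐ t ∂(volume.restrict (Ioi τ)), u' t = r t + uxx t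
  fund : ∀ T1 T2 : ℝ, τ < T1 → T1 < T2 →
      IntervalIntegrable u' volume T1 T2 ∧
      ∀ t ∈ Icc T1 T2, u t = u T1 + ∫ s in T1..t, u' s

/-- A strong solution of the inclusion on `[τ,∞)`. -/
def IsStrongSolution (b ω : ℝ → ℝ) (τ : ℝ) (u : ℝ → Hsp) : Prop :=
  ∃ r u' uxx, IsStrongSolutionWith b ω τ u r u' uxx

/-- The solution is non-negative on `[τ,∞)`. -/
def NonnegOn (u : ℝ → Hsp) (τ : ℝ) : Prop :=
  ∀ t, τ ≤ t → ∀ᵐ x ∂μ01, 0 ≤ u t x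

/-- `v` is positive: it has a continuous representative on `[0,1]`
which is strictly positive on `(0,1)`. -/
def IsPositive (v : Hsp) : Prop :=
  ∃ vt : ℝ → ℝ, ContinuousOn vt (Icc 0 1) ∧ (∀ᵐ x ∂μ01, vt x = v x) ∧
    ∀ x ∈ Ioo (0:ℝ) 1, 0 < vt x


/-- Fourier sine coefficient of `v` (eigenfunctions of `A = −d²/dx²` on `(0,1)`
with Dirichlet boundary conditions are `sin((n+1)πx)`, `n ∈ ℕ`). -/
def sinCoeff (v : Hsp) (n : ℕ) : ℝ :=
  ∫ x in (0:ℝ)..1, v x * Real.sin (((n : ℝ) + 1) * Real.pi * x)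

/-- `v ∈ V^{2r} = D(A^r)`, characterized through the eigenfunction expansion. -/
def MemV2r (r : ℝ) (v : Hsp) : Prop :=
  Summable (fun n : ℕ => ((((n : ℝ) + 1) * Real.pi) ^ (4 * r)) * (sinCoeff v n) ^ 2)

/-- The square of the `V^{2r} = D(A^r)` distance between `v` and `w`. -/
def V2rDistSq (r : ℝ) (v w : Hsp) : ENNReal :=
  ∑' n : ℕ, ENNReal.ofReal (((((n : ℝ) + 1) * Real.pi) ^ (4 * r)) * (sinCoeff (v - w) n) ^ 2)

/-- The multivalued semiflow of the autonomous problem applied to a set: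
`G(t,S) = {u(t) : u ∈ 𝒟(u₀), u₀ ∈ S}`. -/
def autG (b ω : ℝ) (t : ℝ) (S : Set Hsp) : Set Hsp :=
  {y | ∃ u : ℝ → Hsp, u 0 ∈ S ∧
        IsStrongSolution (fun _ => b) (fun _ => ω) 0 u ∧ y = u t}

/-- `𝒜` is the global attractor of the autonomous multivalued semiflow `G`:
compact in `H`, strictly invariant, and attracting every bounded set. -/
structure IsGlobalAttractor (b ω : ℝ) (𝒜 : Set Hsp) : Prop where
  compact : IsCompact 𝒜
  invariant : ∀ t : ℝ, 0 ≤ t → autG b ω t 𝒜 = 𝒜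
  attracting : ∀ B : Set Hsp, Bornology.IsBounded B → ∀ ε > (0:ℝ),
    ∃ T : ℝ, ∀ t, T ≤ t → ∀ y ∈ autG b ω t B, ∃ a ∈ 𝒜, ‖y - a‖ < ε

instance : IsFiniteMeasure μ01 := by unfold μ01; infer_instance

lemma memLp_sin (n : ℕ) :
    MemLp (fun x : ℝ => Real.sqrt 2 * Real.sin (((n : ℝ) + 1) * Real.pi * x)) 2 μ01 := by
  apply MemLp.of_bound (C := Real.sqrt 2)
  · exact Continuous.aestronglyMeasurable (by fun_prop)
  · filter_upwards with x
    rw [norm_mul, Real.norm_eq_abs, Real.norm_eq_abs, abs_of_nonneg (Real.sqrt_nonneg 2)]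
    have := Real.abs_sin_le_one (((n : ℝ) + 1) * Real.pi * x)
    nlinarith [Real.sqrt_nonneg 2]

/-- normalised eigenfunctions -/
def sinLp (n : ℕ) : Hsp := (memLp_sin n).toLp _

lemma int01 (f : ℝ → ℝ) : ∫ x in (0:ℝ)..1, f x = ∫ x, f x ∂μ01 := by
  rw [intervalIntegral.integral_of_le zero_le_one, integral_Ioc_eq_integral_Ioo, μ01]

lemma real_inner_eq_mul_aux (a b : ℝ) : inner ℝ a b = b * a := by
  simp

lemma inner_sinLp (v : Hsp) (n : ℕ) : inner ℝ (sinLp n) v = Real.sqrt 2 * sinCoeff v n := by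
  rw [L2.inner_def, sinCoeff, int01, ← integral_const_mul]
  apply integral_congr_ae
  filter_upwards [(memLp_sin n).coeFn_toLp] with x hx
  rw [sinLp, hx]
  rw [real_inner_eq_mul_aux]
  ring

lemma int_sin_mul (m n : ℕ) : ∫ x in (0:ℝ)..1, Real.sin (((m : ℝ) + 1) * Real.pi * x) *
    Real.sin (((n : ℝ) + 1) * Real.pi * x) = if m = n then 1/2 else 0 := by
  have key : ∀ k : ℤ, ∫ x in (0:ℝ)..1, Real.cos ((k:ℝ) * Real.pi * x) = if k = 0 then 1 else 0 := by
    intro k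
    split_ifs with h
    · simp [h]
    · have hk : (k:ℝ) * Real.pi ≠ 0 := mul_ne_zero (by exact_mod_cast h) Real.pi_ne_zero
      rw [intervalIntegral.integral_comp_mul_left (fun x => Real.cos x) hk]
      simp [Real.sin_int_mul_pi]
  have e : ∀ x : ℝ, Real.sin (((m : ℝ) + 1) * Real.pi * x) * Real.sin (((n : ℝ) + 1) * Real.pi * x)
      = (1/2) * (Real.cos ((((m:ℤ) - n : ℤ):ℝ) * Real.pi * x)
        - Real.cos ((((m:ℤ) + n + 2 : ℤ):ℝ) * Real.pi * x)) := by
    intro x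
    have h1 : (((m:ℤ) - n : ℤ):ℝ) * Real.pi * x = ((m : ℝ) + 1) * Real.pi * x - ((n : ℝ) + 1) * Real.pi * x := by
      push_cast; ring
    have h2 : (((m:ℤ) + n + 2 : ℤ):ℝ) * Real.pi * x = ((m : ℝ) + 1) * Real.pi * x + ((n : ℝ) + 1) * Real.pi * x := by
      push_cast; ring
    rw [h1, h2, Real.cos_sub, Real.cos_add]; ring
  simp_rw [e]
  rw [intervalIntegral.integral_const_mul, intervalIntegral.integral_sub, key, key]
  · have : ((m:ℤ) + n + 2) ≠ 0 := by positivity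
    by_cases h : m = n
    · simp [h]; intro h'; omega
    · have : (m:ℤ) - n ≠ 0 := by omega
      simp [h, this]; intro h'; omega
  · exact Continuous.intervalIntegrable (by fun_prop) _ _
  · exact Continuous.intervalIntegrable (by fun_prop) _ _

lemma orthonormal_sinLp : Orthonormal ℝ sinLp := by
  rw [orthonormal_iff_ite]
  intro m n
  rw [inner_sinLp, sinCoeff]
  have : ∫ x in (0:ℝ)..1, (sinLp n) x * Real.sin (((m : ℝ) + 1) * Real.pi * x)
      = Real.sqrt 2 * (if m = n then 1/2 else 0) := by
    rw [← int_sin_mul m n, int01, int01, ← integral_const_mul]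
    apply integral_congr_ae
    filter_upwards [(memLp_sin n).coeFn_toLp] with x hx
    rw [sinLp, hx]; ring
  rw [this, ← mul_assoc, Real.mul_self_sqrt (by norm_num)]
  split_ifs <;> norm_num

lemma bessel (v : Hsp) : ∑' n : ℕ, ENNReal.ofReal ((sinCoeff v n) ^ 2) ≤ ENNReal.ofReal (‖v‖ ^ 2) := by
  have h1 := orthonormal_sinLp.tsum_inner_products_le (𝕜 := ℝ) v
  have h2 := orthonormal_sinLp.inner_products_summable (𝕜 := ℝ) v
  calc ∑' n : ℕ, ENNReal.ofReal ((sinCoeff v n) ^ 2)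
      ≤ ∑' n : ℕ, ENNReal.ofReal (‖inner ℝ (sinLp n) v‖ ^ 2) := by
        refine ENNReal.tsum_le_tsum fun n => ENNReal.ofReal_le_ofReal ?_
        rw [inner_sinLp, Real.norm_eq_abs, sq_abs, mul_pow, Real.sq_sqrt (by norm_num)]
        nlinarith [sq_nonneg (sinCoeff v n)]
    _ = ENNReal.ofReal (∑' n : ℕ, (‖inner ℝ (sinLp n) v‖ ^ 2)) :=
        (ENNReal.ofReal_tsum_of_nonneg (fun n => by positivity) h2).symm
    _ ≤ _ := ENNReal.ofReal_le_ofReal h1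

lemma sinCoeff_eq (v : Hsp) (n : ℕ) : sinCoeff v n = (Real.sqrt 2)⁻¹ * inner ℝ (sinLp n) v := by
  rw [inner_sinLp, ← mul_assoc, inv_mul_cancel₀ (by positivity), one_mul]

/-- the coefficient functional -/
def cL (n : ℕ) : Hsp →L[ℝ] ℝ := (Real.sqrt 2)⁻¹ • innerSL ℝ (sinLp n)

lemma cL_apply (v : Hsp) (n : ℕ) : cL n v = sinCoeff v n := by
  rw [sinCoeff_eq]; simp [cL]

lemma spatial {v w : Hsp} (h : InDomainA v w) (n : ℕ) :
    sinCoeff w n = - (((n:ℝ)+1) * Real.pi)^2 * sinCoeff v n := by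
  obtain ⟨vt, hc, h0, h1, hv, g, hg, hgw⟩ := h
  set k : ℝ := ((n:ℝ)+1) * Real.pi with hk
  have hsin1 : Real.sin (k * 1) = 0 := by
    have := Real.sin_nat_mul_pi (n+1)
    push_cast at this
    rw [mul_one, hk, this]
  have hwi : IntervalIntegrable (fun x => w x) volume 0 1 := by
    rw [intervalIntegrable_iff_integrableOn_Ioo_of_le zero_le_one]
    exact (Lp.memLp w).integrable (by norm_num)
  set G : ℝ → ℝ := fun x => ∫ z in (1/2:ℝ)..x, w z with hG
  have hmem : (1/2:ℝ) ∈ uIcc (0:ℝ) 1 := by rw [uIcc_of_le zero_le_one]; constructor <;> norm_num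
  have hGac : AbsolutelyContinuousOnInterval G 0 1 :=
    hwi.absolutelyContinuousOnInterval_intervalIntegral hmem
  have hGd := hwi.ae_hasDerivAt_integral
  have hsac : AbsolutelyContinuousOnInterval (fun x => Real.sin (k * x)) 0 1 :=
    ContDiffOn.absolutelyContinuousOnInterval (by fun_prop)
  have hsd : ∀ x, HasDerivAt (fun x => Real.sin (k * x)) (k * Real.cos (k * x)) x := by
    intro x
    have := ((hasDerivAt_id x).const_mul k).sin
    simpa [mul_comm] using this
  have hcd : ∀ x, HasDerivAt (fun x => k * Real.cos (k * x)) (- k^2 * Real.sin (k * x)) x := by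
    intro x
    have := (((hasDerivAt_id x).const_mul k).cos).const_mul k
    have e : - k^2 * Real.sin (k * x) = k * (-Real.sin (k * id x) * (k * 1)) := by
      simp only [id, mul_one]; ring
    rw [e]; exact this
  have hgG : ∀ x ∈ Ioo (0:ℝ) 1, g x = g (1/2) + G x := by
    intro x hx
    have := hgw x hx (1/2) (by constructor <;> norm_num)
    have h2 : G x = ∫ z in (1/2:ℝ)..x, w z := rfl
    linarith
  -- first integration by parts
  have I1 := intervalIntegral.integral_mul_deriv_eq_deriv_mul_of_hasDerivAt (a := 0) (b := 1)
    (u := vt) (u' := fun x => g (1/2) + G x)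
    (v := fun x => k * Real.cos (k * x)) (v' := fun x => - k^2 * Real.sin (k * x))
    (by rwa [uIcc_of_le zero_le_one]) (by fun_prop)
    (by
      intro x hx
      rw [min_eq_left zero_le_one, max_eq_right zero_le_one] at hx
      simpa only [← hgG x hx] using hg x hx)
    (fun x _ => hcd x)
    (ContinuousOn.intervalIntegrable (continuousOn_const.add hGac.continuousOn))
    (Continuous.intervalIntegrable (by fun_prop) _ _)
  have I2 := hGac.integral_mul_deriv_eq_deriv_mul hsac
  have e1 : ∫ x in (0:ℝ)..1, G x * deriv (fun x => Real.sin (k * x)) x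
      = ∫ x in (0:ℝ)..1, G x * (k * Real.cos (k * x)) := by
    have hd : deriv (fun x => Real.sin (k * x)) = fun x => k * Real.cos (k * x) :=
      funext fun x => (hsd x).deriv
    rw [hd]
  have e2 : ∫ x in (0:ℝ)..1, deriv G x * Real.sin (k * x) = ∫ x in (0:ℝ)..1, w x * Real.sin (k * x) := by
    apply intervalIntegral.integral_congr_ae
    filter_upwards [hGd] with x hx hx'
    rw [(hx (uIoc_subset_uIcc hx') _ hmem).deriv]
  have e3 : ∫ x in (0:ℝ)..1, (g (1/2) + G x) * (k * Real.cos (k * x))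
      = ∫ x in (0:ℝ)..1, G x * (k * Real.cos (k * x)) := by
    have : ∫ x in (0:ℝ)..1, (k * Real.cos (k * x)) = 0 := by
      rw [intervalIntegral.integral_eq_sub_of_hasDerivAt (fun x _ => hsd x)
        (Continuous.intervalIntegrable (by fun_prop) _ _), hsin1]
      simp
    simp_rw [add_mul]
    rw [intervalIntegral.integral_add, intervalIntegral.integral_const_mul, this]
    · simp
    · exact Continuous.intervalIntegrable (by fun_prop) _ _
    · exact ContinuousOn.intervalIntegrable (hGac.continuousOn.mul (by fun_prop))
  have e4 : ∫ x in (0:ℝ)..1, vt x * (- k^2 * Real.sin (k * x)) = - k^2 * sinCoeff v n := by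
    rw [sinCoeff, int01, int01, ← integral_const_mul]
    apply integral_congr_ae
    filter_upwards [hv] with x hx
    rw [hx]; ring
  rw [e1, e2, hsin1] at I2
  rw [e3, e4, h0, h1, I2] at I1
  rw [I1, sinCoeff]
  simp [hk]

lemma energy (c p ρ : ℝ → ℝ) (l : ℝ) (hl : 0 < l) (hp : IntervalIntegrable p volume 1 2)
    (hc : ∀ t ∈ Icc (1:ℝ) 2, c t = c 1 + ∫ s in (1:ℝ)..t, p s)
    (hρ : IntervalIntegrable (fun t => ρ t ^ 2) volume 1 2)
    (hae : ∀ᵐ t, t ∈ Ioi (0:ℝ) → p t = ρ t - l * c t) :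
    c 2 ^ 2 ≤ Real.exp (-l) * c 1 ^ 2
      + ∫ s in (1:ℝ)..2, Real.exp (-(l * (2 - s))) * l⁻¹ * ρ s ^ 2 := by
  set C : ℝ → ℝ := fun t => c 1 + ∫ s in (1:ℝ)..t, p s with hC
  have hCac : AbsolutelyContinuousOnInterval C 1 2 := by
    have h1 : AbsolutelyContinuousOnInterval (fun _ : ℝ => c 1) 1 2 :=
      ContDiffOn.absolutelyContinuousOnInterval (by fun_prop)
    exact h1.add (hp.absolutelyContinuousOnInterval_intervalIntegral (by simp))
  have hEac : AbsolutelyContinuousOnInterval (fun t => Real.exp (-(l * (2 - t)))) 1 2 :=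
    ContDiffOn.absolutelyContinuousOnInterval (by fun_prop)
  have hFac : AbsolutelyContinuousOnInterval (fun t => Real.exp (-(l * (2 - t))) * (C t * C t)) 1 2 :=
    hEac.mul (hCac.mul hCac)
  have hF := hFac.integral_deriv_eq_sub
  have hle : ∫ t in (1:ℝ)..2, deriv (fun t => Real.exp (-(l * (2 - t))) * (C t * C t)) t
      ≤ ∫ s in (1:ℝ)..2, Real.exp (-(l * (2 - s))) * l⁻¹ * ρ s ^ 2 := by
    apply intervalIntegral.integral_mono_ae_restrict (by norm_num) hFac.intervalIntegrable_deriv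
    · exact hρ.continuousOn_mul (by fun_prop)
    · rw [Filter.EventuallyLE, ae_restrict_iff' measurableSet_Icc]
      filter_upwards [hae, hp.ae_hasDerivAt_integral] with t h1 h2 ht
      have hpt := h1 (by simp only [mem_Ioi]; linarith [ht.1])
      have hd1 : HasDerivAt C (p t) t := by
        have := (h2 (by rwa [uIcc_of_le (by norm_num)]) 1 (by simp)).const_add (c 1)
        exact this
      have hd2 : HasDerivAt (fun t => Real.exp (-(l * (2 - t)))) (Real.exp (-(l * (2 - t))) * l) t := by
        have := ((((hasDerivAt_id t).const_sub 2).const_mul l).neg).exp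
        simpa using this
      have hd := hd2.mul (hd1.mul hd1)
      have hd' := hd.deriv
      have e : deriv (fun t => Real.exp (-(l * (2 - t))) * (C t * C t)) t =
        Real.exp (-(l * (2 - t))) * l * (C t * C t) + Real.exp (-(l * (2 - t))) * (p t * C t + C t * p t) := hd'
      have hct : c t = C t := hc t ht
      show deriv (fun t => Real.exp (-(l * (2 - t))) * (C t * C t)) t ≤ _
      rw [e, hpt, hct]
      have hE := Real.exp_pos (-(l * (2 - t)))
      have : l * (C t * C t) + 2 * C t * (ρ t - l * C t) ≤ l⁻¹ * ρ t ^ 2 := by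
        have h3 : l⁻¹ * ρ t ^ 2 - (l * (C t * C t) + 2 * C t * (ρ t - l * C t))
          = l⁻¹ * (ρ t - l * C t) ^ 2 := by field_simp; ring
        have : 0 ≤ l⁻¹ * (ρ t - l * C t) ^ 2 := by positivity
        linarith
      nlinarith
  rw [hF] at hle
  have hc2 : c 2 = C 2 := hc 2 (by norm_num)
  have hc1 : c 1 = C 1 := hc 1 (by norm_num)
  rw [← hc2, ← hc1] at hle
  have e1 : (2:ℝ) - 1 = 1 := by norm_num
  simp only [sub_self, mul_zero, neg_zero, Real.exp_zero, one_mul, e1, mul_one] at hle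
  nlinarith

lemma rpow_le_exp_aux {x p : ℝ} (hx : 0 ≤ x) (hp0 : 0 ≤ p) (hp1 : p ≤ 1) : x ^ p ≤ Real.exp x := by
  have h := Real.add_one_le_exp x
  rcases le_total x 1 with h1 | h1
  · have := Real.rpow_le_one hx h1 hp0
    linarith
  · have := Real.rpow_le_rpow_of_exponent_le h1 hp1
    rw [Real.rpow_one] at this
    linarith

lemma weight1 {l q s : ℝ} (hl : 1 ≤ l) (hq0 : 1/2 ≤ q) (hq1 : q < 1) (hs : 0 < s) :
    l ^ (2 * q) * (Real.exp (-(l * s)) * l⁻¹) ≤ s ^ (-(2 * q - 1)) := by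
  have hl0 : 0 < l := by linarith
  have h := rpow_le_exp_aux (x := l * s) (p := 2 * q - 1) (by positivity) (by linarith) (by linarith)
  rw [Real.mul_rpow hl0.le hs.le] at h
  have e : l ^ (2 * q) * l⁻¹ = l ^ (2 * q - 1) := by
    rw [Real.rpow_sub_one hl0.ne']; rfl
  rw [Real.rpow_neg hs.le, Real.exp_neg]
  have : l ^ (2 * q) * ((Real.exp (l * s))⁻¹ * l⁻¹) = l ^ (2 * q - 1) / Real.exp (l * s) := by
    rw [← e]; field_simp
  rw [this, div_le_iff₀ (Real.exp_pos _), inv_mul_eq_div, le_div_iff₀ (by positivity)]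
  exact h

lemma weight2 {l q : ℝ} (hl : 1 ≤ l) (hq1 : q < 1) : l ^ (2 * q) * Real.exp (-l) ≤ 4 := by
  have h1 : l ^ (2 * q) ≤ l ^ (2:ℝ) := Real.rpow_le_rpow_of_exponent_le hl (by linarith)
  have h2 : l / 2 ≤ Real.exp (l / 2) := by linarith [Real.add_one_le_exp (l / 2)]
  have h3 : Real.exp l = Real.exp (l / 2) ^ 2 := by rw [← Real.exp_nat_mul]; congr 1; push_cast; ring
  rw [Real.exp_neg, ← div_eq_mul_inv, div_le_iff₀ (Real.exp_pos _), h3]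
  rw [Real.rpow_two] at h1
  nlinarith

lemma l_ge_one (n : ℕ) : (1:ℝ) ≤ ((n:ℝ)+1) * Real.pi := by
  have := Real.pi_gt_three
  have h : (0:ℝ) ≤ n := n.cast_nonneg
  nlinarith

lemma weight_eq (n : ℕ) (q : ℝ) :
    ((((n : ℝ) + 1) * Real.pi) ^ (4 * q)) = ((((n : ℝ) + 1) * Real.pi) ^ 2) ^ (2 * q) := by
  have := l_ge_one n
  rw [← Real.rpow_natCast, ← Real.rpow_mul (by linarith)]
  congr 1; push_cast; ring

lemma mode_bound {b ω : ℝ} {u r u' uxx : ℝ → Hsp}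
    (H : IsStrongSolutionWith (fun _ => b) (fun _ => ω) 0 u r u' uxx)
    {q : ℝ} (hq0 : 1/2 ≤ q) (hq1 : q < 1) (n : ℕ) :
    ENNReal.ofReal ((((n : ℝ) + 1) * Real.pi) ^ (4 * q) * (sinCoeff (u 2) n) ^ 2) ≤
      4 * ENNReal.ofReal (sinCoeff (u 1) n ^ 2) +
      ∫⁻ s in Ioo (1:ℝ) 2, ENNReal.ofReal ((2 - s) ^ (-(2 * q - 1))) *
        ENNReal.ofReal (sinCoeff (r s) n ^ 2) := by
  rw [weight_eq]
  set l : ℝ := (((n : ℝ) + 1) * Real.pi) ^ 2 with hl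
  have hl1 : 1 ≤ l := by have := l_ge_one n; nlinarith
  have hl0 : 0 < l := by linarith
  obtain ⟨hint, hfund⟩ := H.fund 1 2 (by norm_num) (by norm_num)
  have hρm : MemLp (fun t => cL n (r t)) 2 (volume.restrict (Ioo 1 2)) := by
    have h1 := (H.rmem 2 (by norm_num)).mono_measure
      (Measure.restrict_mono (Ioo_subset_Ioo_left (a₁ := 0) (a₂ := 1) (by norm_num)) le_rfl)
    exact (cL n).comp_memLp' h1
  have hρ2 : IntegrableOn (fun t => sinCoeff (r t) n ^ 2) (Ioo 1 2) := by
    have := hρm.integrable_sq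
    simp only [cL_apply] at this
    exact this
  have hρi : IntervalIntegrable (fun t => sinCoeff (r t) n ^ 2) volume 1 2 := by
    rw [intervalIntegrable_iff_integrableOn_Ioo_of_le (by norm_num)]; exact hρ2
  have E := energy (fun t => cL n (u t)) (fun t => cL n (u' t)) (fun t => sinCoeff (r t) n) l hl0
    ⟨(cL n).integrable_comp hint.1, (cL n).integrable_comp hint.2⟩
    (by
      intro t ht
      have h1 : IntervalIntegrable u' volume 1 t :=
        hint.mono_set (by rw [uIcc_of_le ht.1, uIcc_of_le (by norm_num)]; exact Icc_subset_Icc_right ht.2)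
      show cL n (u t) = cL n (u 1) + _
      rw [hfund t ht, map_add, (cL n).intervalIntegral_comp_comm h1])
    hρi
    (by
      have h1 := (ae_restrict_iff' measurableSet_Ioi).1 H.dom
      have h2 := (ae_restrict_iff' measurableSet_Ioi).1 H.eq
      filter_upwards [h1, h2] with t h1 h2 ht
      show cL n (u' t) = sinCoeff (r t) n - l * cL n (u t)
      rw [h2 ht, map_add, cL_apply, cL_apply, cL_apply, spatial (h1 ht) n]
      ring)
  simp only [cL_apply] at E
  have hI : IntegrableOn (fun s => l ^ (2 * q) * (Real.exp (-(l * (2 - s))) * l⁻¹ * sinCoeff (r s) n ^ 2))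
      (Ioo 1 2) := by
    rw [← intervalIntegrable_iff_integrableOn_Ioo_of_le (by norm_num)]
    exact (hρi.continuousOn_mul (by fun_prop)).const_mul _
  have hpos : 0 ≤ l ^ (2 * q) := by positivity
  calc ENNReal.ofReal (l ^ (2 * q) * sinCoeff (u 2) n ^ 2)
      ≤ ENNReal.ofReal (4 * sinCoeff (u 1) n ^ 2 +
          ∫ s in Ioo (1:ℝ) 2, l ^ (2 * q) * (Real.exp (-(l * (2 - s))) * l⁻¹ * sinCoeff (r s) n ^ 2)) := by
        apply ENNReal.ofReal_le_ofReal
        rw [integral_const_mul, ← integral_Ioc_eq_integral_Ioo,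
          ← intervalIntegral.integral_of_le (by norm_num)]
        have h1 := mul_le_mul_of_nonneg_left E hpos
        have h2 := mul_le_mul_of_nonneg_right (weight2 hl1 hq1) (sq_nonneg (sinCoeff (u 1) n))
        nlinarith
    _ ≤ ENNReal.ofReal (4 * sinCoeff (u 1) n ^ 2) + ENNReal.ofReal (
          ∫ s in Ioo (1:ℝ) 2, l ^ (2 * q) * (Real.exp (-(l * (2 - s))) * l⁻¹ * sinCoeff (r s) n ^ 2)) :=
        ENNReal.ofReal_add_le
    _ ≤ _ := by
        gcongr
        · rw [ENNReal.ofReal_mul (by norm_num)]; simp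
        · rw [ofReal_integral_eq_lintegral_ofReal hI
            (by filter_upwards with s; simp only [Pi.zero_apply]; positivity)]
          apply lintegral_mono_ae
          rw [ae_restrict_iff' measurableSet_Ioo]
          filter_upwards with s hs
          rw [← ENNReal.ofReal_mul (Real.rpow_nonneg (by linarith [hs.2]) _)]
          apply ENNReal.ofReal_le_ofReal
          rw [← mul_assoc]
          exact mul_le_mul_of_nonneg_right
            (weight1 hl1 hq0 hq1 (by linarith [hs.2])) (sq_nonneg _)

lemma r_bound {b ω : ℝ} (hb : 0 < b) (hω : 0 ≤ ω) {u r : Hsp} {R : ℝ} (hR : ‖u‖ ≤ R)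
    (h : ∀ᵐ x ∂μ01, ∃ h ∈ heaviside (u x), r x = b * h + ω * u x) :
    ‖r‖ ≤ ((measureUnivNNReal μ01 : ℝ) ^ (2:ENNReal).toReal⁻¹) * b + ω * R := by
  have h1 : ‖r - ω • u‖ ≤ (measureUnivNNReal μ01 : ℝ) ^ (2:ENNReal).toReal⁻¹ * b := by
    apply Lp.norm_le_of_ae_bound hb.le
    filter_upwards [h, Lp.coeFn_sub r (ω • u), Lp.coeFn_smul ω u] with x ⟨k, hk, hx⟩ h2 h3
    rw [h2, Pi.sub_apply, h3, hx, Pi.smul_apply, smul_eq_mul, add_sub_cancel_right, Real.norm_eq_abs,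
      abs_mul, abs_of_pos hb]
    have : |k| ≤ 1 := by
      unfold heaviside at hk
      rw [abs_le]
      split_ifs at hk
      · simp at hk; subst hk; norm_num
      · exact hk
      · simp at hk; subst hk; norm_num
    nlinarith
  have h2 : ‖ω • u‖ ≤ ω * R := by
    rw [norm_smul, Real.norm_eq_abs, abs_of_nonneg hω]; gcongr
  calc ‖r‖ = ‖(r - ω • u) + ω • u‖ := by rw [sub_add_cancel]
    _ ≤ _ := (norm_add_le _ _).trans (add_le_add h1 h2)

lemma attr_bound {b ω : ℝ} (hb : 0 < b) (hω : 0 ≤ ω)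
    {A : Set Hsp} (hattr : IsGlobalAttractor b ω A) {q : ℝ} (hq0 : 1/2 ≤ q) (hq1 : q < 1) :
    ∃ M : ENNReal, M ≠ ⊤ ∧ ∀ v ∈ A, V2rDistSq q v 0 ≤ M := by
  obtain ⟨R, hR⟩ := hattr.compact.isBounded.exists_norm_le
  set K : ℝ := ((measureUnivNNReal μ01 : ℝ) ^ (2:ENNReal).toReal⁻¹) * b + ω * R with hK
  refine ⟨4 * ENNReal.ofReal (R ^ 2) +
    ∫⁻ s in Ioo (1:ℝ) 2, ENNReal.ofReal ((2 - s) ^ (-(2 * q - 1))) * ENNReal.ofReal (K ^ 2), ?_, ?_⟩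
  · refine ENNReal.add_ne_top.2 ⟨ENNReal.mul_ne_top (by norm_num) ENNReal.ofReal_ne_top, ?_⟩
    rw [lintegral_mul_const' _ _ ENNReal.ofReal_ne_top]
    refine ENNReal.mul_ne_top ?_ ENNReal.ofReal_ne_top
    have h1 : IntervalIntegrable (fun s : ℝ => s ^ (-(2 * q - 1))) volume 1 0 :=
      intervalIntegral.intervalIntegrable_rpow' (by linarith)
    have h2 := h1.comp_sub_left 2
    norm_num at h2
    have h3 : IntegrableOn (fun s : ℝ => (2 - s) ^ (-(2 * q - 1))) (Ioo 1 2) := by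
      rw [← intervalIntegrable_iff_integrableOn_Ioo_of_le (by norm_num)]
      simpa using h2
    exact h3.lintegral_lt_top.ne
  · intro v hv
    rw [← hattr.invariant 2 (by norm_num)] at hv
    obtain ⟨u, hu0, hu, rfl⟩ := hv
    have huR : ∀ t, 0 ≤ t → ‖u t‖ ≤ R := by
      intro t ht
      apply hR
      rw [← hattr.invariant t ht]
      exact ⟨u, hu0, hu, rfl⟩
    obtain ⟨r, u', uxx, H⟩ := hu
    have hρm : ∀ n, AEMeasurable (fun t => sinCoeff (r t) n) (volume.restrict (Ioo 1 2)) := by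
      intro n
      have h1 := (H.rmem 2 (by norm_num)).mono_measure
        (Measure.restrict_mono (Ioo_subset_Ioo_left (a₁ := 0) (a₂ := 1) (by norm_num)) le_rfl)
      have h2 := ((cL n).comp_memLp' h1).aestronglyMeasurable.aemeasurable
      refine h2.congr ?_
      filter_upwards with t
      simp [cL_apply]
    calc V2rDistSq q (u 2) 0 = ∑' n : ℕ,
          ENNReal.ofReal ((((n : ℝ) + 1) * Real.pi) ^ (4 * q) * (sinCoeff (u 2) n) ^ 2) := by
          simp only [V2rDistSq, sub_zero]
      _ ≤ ∑' n : ℕ, (4 * ENNReal.ofReal (sinCoeff (u 1) n ^ 2) +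
          ∫⁻ s in Ioo (1:ℝ) 2, ENNReal.ofReal ((2 - s) ^ (-(2 * q - 1))) *
            ENNReal.ofReal (sinCoeff (r s) n ^ 2)) :=
          ENNReal.tsum_le_tsum fun n => mode_bound H hq0 hq1 n
      _ = 4 * ∑' n : ℕ, ENNReal.ofReal (sinCoeff (u 1) n ^ 2) +
          ∫⁻ s in Ioo (1:ℝ) 2, ∑' n : ℕ, ENNReal.ofReal ((2 - s) ^ (-(2 * q - 1))) *
            ENNReal.ofReal (sinCoeff (r s) n ^ 2) := by
          rw [ENNReal.tsum_add, ENNReal.tsum_mul_left, lintegral_tsum]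
          intro n
          refine AEMeasurable.mul ?_ ((hρm n).pow_const 2).ennreal_ofReal
          exact Measurable.aemeasurable (by fun_prop)
      _ ≤ _ := by
          refine add_le_add (mul_le_mul_right ?_ _) ?_
          · exact (bessel _).trans (ENNReal.ofReal_le_ofReal
              (pow_le_pow_left₀ (norm_nonneg _) (huR 1 (by norm_num)) 2))
          · apply lintegral_mono_ae
            have h1 := ae_restrict_of_ae_restrict_of_subset
              (show Ioo (1:ℝ) 2 ⊆ Ioi 0 from fun x hx => lt_trans one_pos hx.1) H.sel
            filter_upwards [h1, ae_restrict_mem measurableSet_Ioo] with s hs hs'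
            rw [ENNReal.tsum_mul_left]
            gcongr
            exact (bessel _).trans (ENNReal.ofReal_le_ofReal
              (pow_le_pow_left₀ (norm_nonneg _)
                (r_bound hb hω (huR s (by linarith [hs'.1])) hs) 2))

lemma dist_mono {r q : ℝ} (h : r ≤ q) (v w : Hsp) : V2rDistSq r v w ≤ V2rDistSq q v w := by
  refine ENNReal.tsum_le_tsum fun n => ENNReal.ofReal_le_ofReal ?_
  exact mul_le_mul_of_nonneg_right
    (Real.rpow_le_rpow_of_exponent_le (l_ge_one n) (by linarith)) (sq_nonneg _)

lemma sinCoeff_sub (v w : Hsp) (n : ℕ) : sinCoeff (v - w) n = sinCoeff v n - sinCoeff w n := by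
  rw [← cL_apply, ← cL_apply, ← cL_apply, map_sub]

lemma dist_tri (q : ℝ) (v w : Hsp) :
    V2rDistSq q v w ≤ 2 * V2rDistSq q v 0 + 2 * V2rDistSq q w 0 := by
  unfold V2rDistSq
  rw [← ENNReal.tsum_mul_left, ← ENNReal.tsum_mul_left, ← ENNReal.tsum_add]
  refine ENNReal.tsum_le_tsum fun n => ?_
  have hp : 0 ≤ (((n : ℝ) + 1) * Real.pi) ^ (4 * q) :=
    Real.rpow_nonneg (by linarith [l_ge_one n]) _
  rw [sub_zero, sub_zero, sinCoeff_sub]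
  have e2 : (2:ENNReal) = ENNReal.ofReal 2 := by simp
  rw [e2, ← ENNReal.ofReal_mul (by norm_num), ← ENNReal.ofReal_mul (by norm_num),
    ← ENNReal.ofReal_add (by positivity) (by positivity)]
  apply ENNReal.ofReal_le_ofReal
  nlinarith [mul_nonneg hp (sq_nonneg (sinCoeff v n + sinCoeff w n))]

lemma interp {r q : ℝ} (hr : 0 ≤ r) (h : r < q) {ε : ℝ} (hε : 0 < ε) :
    ∃ C : ℝ, 0 ≤ C ∧ ∀ v w : Hsp, V2rDistSq r v w ≤
      ENNReal.ofReal ε * V2rDistSq q v w + ENNReal.ofReal C * ENNReal.ofReal (‖v - w‖ ^ 2) := by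
  have ht := tendsto_rpow_neg_atTop (y := 4 * (q - r)) (by linarith)
  obtain ⟨L, hL⟩ := Filter.eventually_atTop.1 (ht.eventually (gt_mem_nhds hε))
  refine ⟨(max L 0) ^ (4 * r), by positivity, fun v w => ?_⟩
  calc V2rDistSq r v w ≤ ∑' n : ℕ, (ENNReal.ofReal ε * ENNReal.ofReal (((((n : ℝ) + 1) * Real.pi) ^ (4 * q)) * (sinCoeff (v - w) n) ^ 2) + ENNReal.ofReal ((max L 0) ^ (4 * r)) * ENNReal.ofReal (sinCoeff (v - w) n ^ 2)) := by
        refine ENNReal.tsum_le_tsum fun n => ?_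
        have h1 := l_ge_one n
        set k := ((n : ℝ) + 1) * Real.pi
        have hk : 0 < k := by linarith
        rw [← ENNReal.ofReal_mul hε.le, ← ENNReal.ofReal_mul (by positivity),
          ← ENNReal.ofReal_add (by positivity) (by positivity)]
        apply ENNReal.ofReal_le_ofReal
        rw [← mul_assoc, ← add_mul]
        refine mul_le_mul_of_nonneg_right ?_ (sq_nonneg _)
        rcases le_total L k with h2 | h2
        · have h3 := hL k h2
          have h4 : k ^ (4 * r) = k ^ (-(4 * (q - r))) * k ^ (4 * q) := by
            rw [← Real.rpow_add hk]; congr 1; ring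
          have h5 : 0 < k ^ (4 * q) := by positivity
          have h6 : 0 ≤ (max L 0) ^ (4 * r) := by positivity
          rw [h4]
          nlinarith
        · have h3 : k ^ (4 * r) ≤ (max L 0) ^ (4 * r) :=
            Real.rpow_le_rpow hk.le (h2.trans (le_max_left _ _)) (by linarith)
          have h5 : 0 < k ^ (4 * q) := by positivity
          nlinarith [mul_pos hε h5]
    _ = ENNReal.ofReal ε * V2rDistSq q v w + ENNReal.ofReal ((max L 0) ^ (4 * r)) * ∑' n : ℕ, ENNReal.ofReal (sinCoeff (v - w) n ^ 2) := by
        rw [ENNReal.tsum_add, ENNReal.tsum_mul_left, ENNReal.tsum_mul_left, V2rDistSq]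
    _ ≤ _ := by
        gcongr
        exact bessel _

/-- in the autonomous case with `ω < π²`, the global attractor is
compact in `V^{2r}` for every `0 ≤ r < 1`: it is contained and bounded in
`V^{2r}` and sequentially compact with respect to the `V^{2r}` distance. -/
theorem statement8
    (b ω : ℝ) (hb : 0 < b) (hω : 0 ≤ ω) (hωπ : ω < Real.pi ^ 2)
    (𝒜 : Set Hsp) (hattr : IsGlobalAttractor b ω 𝒜) :
    ∀ r : ℝ, 0 ≤ r → r < 1 →
      (∀ v ∈ 𝒜, MemV2r r v) ∧
      (∃ M : ℝ, ∀ v ∈ 𝒜, V2rDistSq r v 0 ≤ ENNReal.ofReal M) ∧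
      ∀ f : ℕ → Hsp, (∀ n, f n ∈ 𝒜) →
        ∃ a ∈ 𝒜, ∃ φ : ℕ → ℕ, StrictMono φ ∧
          Filter.Tendsto (fun n => V2rDistSq r (f (φ n)) a) Filter.atTop (nhds 0) := by
  intro r hr0 hr1
  obtain ⟨q, hq, hq1⟩ := exists_between (max_lt hr1 (show (1/2:ℝ) < 1 by norm_num))
  have hrq : r < q := (le_max_left _ _).trans_lt hq
  have hq0 : 1/2 ≤ q := ((le_max_right _ _).trans_lt hq).le
  obtain ⟨M, hM, hMb⟩ := attr_bound hb hω hattr hq0 hq1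
  have hrM : ∀ v ∈ 𝒜, V2rDistSq r v 0 ≤ M := fun v hv => (dist_mono hrq.le v 0).trans (hMb v hv)
  refine ⟨fun v hv => ?_, ⟨M.toReal, fun v hv => ?_⟩, fun f hf => ?_⟩
  · have h1 : V2rDistSq r v 0 ≠ ⊤ := ne_top_of_le_ne_top hM (hrM v hv)
    have h2 := ENNReal.summable_toReal h1
    refine h2.congr fun n => ?_
    have hp : 0 ≤ (((n : ℝ) + 1) * Real.pi) ^ (4 * r) :=
      Real.rpow_nonneg (by linarith [l_ge_one n]) _
    rw [sub_zero, ENNReal.toReal_ofReal (by positivity)]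
  · rw [ENNReal.ofReal_toReal hM]; exact hrM v hv
  · obtain ⟨a, ha, φ, hφ, hlim⟩ := hattr.compact.tendsto_subseq hf
    refine ⟨a, ha, φ, hφ, ?_⟩
    rw [ENNReal.tendsto_nhds_zero]
    intro ε hε
    have hN : 2 * M + 2 * M ≠ ⊤ := ENNReal.add_ne_top.2
      ⟨ENNReal.mul_ne_top (by norm_num) hM, ENNReal.mul_ne_top (by norm_num) hM⟩
    have hε2 : ε / 2 ≠ 0 := (ENNReal.half_pos hε.ne').ne'
    obtain ⟨δ, hδ, hδN⟩ : ∃ δ : ℝ, 0 < δ ∧ ENNReal.ofReal δ * (2 * M + 2 * M) ≤ ε / 2 := by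
      obtain ⟨δ, hδ, h⟩ := ENNReal.exists_nnreal_pos_mul_lt hN hε2
      refine ⟨δ, by exact_mod_cast hδ, ?_⟩
      rw [ENNReal.ofReal_coe_nnreal]; exact h.le
    obtain ⟨C, hC, hI⟩ := interp hr0 hrq hδ
    have hT : Filter.Tendsto (fun n => ENNReal.ofReal C * ENNReal.ofReal (‖f (φ n) - a‖ ^ 2))
        Filter.atTop (nhds 0) := by
      have h1 : Filter.Tendsto (fun n => ‖f (φ n) - a‖) Filter.atTop (nhds 0) :=
        tendsto_iff_norm_sub_tendsto_zero.1 hlim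
      have h2 : Filter.Tendsto (fun n => C * ‖f (φ n) - a‖ ^ 2) Filter.atTop (nhds 0) := by
        simpa using (h1.pow 2).const_mul C
      have h3 := ENNReal.tendsto_ofReal h2
      simpa [ENNReal.ofReal_mul hC] using h3
    have hT' := (ENNReal.tendsto_nhds_zero.1 hT) (ε / 2) (ENNReal.half_pos hε.ne')
    filter_upwards [hT'] with n hn
    calc V2rDistSq r (f (φ n)) a ≤ _ := hI _ _
      _ ≤ ENNReal.ofReal δ * (2 * M + 2 * M) + ε / 2 := by
          gcongr
          refine (dist_tri q _ _).trans ?_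
          gcongr
          · exact hMb _ (hf _)
          · exact hMb _ ha
      _ ≤ ε / 2 + ε / 2 := by gcongr
      _ = ε := ENNReal.add_halves ε

end
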